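/- arXiv:2502.09634 — 2 statements merged into one kernel-verified Lean document; each statement's English description precedes it below -/
import Mathlib

section
/- (Strong Ekeland variational principle in vector B-metric spaces.) Let (X,d) be a complete vector B-metric space such that d is continuous, and let f : X → ℝⁿ be lower semicontinuous, bounded from below, and satisfying condition (H). Then for given ε, δ > 0 and x₀ ∈ X with f(x₀) ≤ f(x) + ε e for all x ∈ X, there exist a sequence (x_k) ⊂ X and x* ∈ X such that: x_k → x* as k → ∞; f(x*) ≤ f(x₀); d(x*, x₀) ≤ δ e; if x ∈ X satisfies f(x*) + (ε/δ) d(x*, x_k) ≥ f(x) + (ε/δ) d(x, x_k) for all k ≥ 0, then x = x*; and moreover, if x ∈ X satisfies f(x*) ≥ f(x) + (ε/δ) B d(x*, x) + (ε/δ)(B − I) d(x*, x_k) for all k ≥ 0, then x = x*. -/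
open Filter Matrix Topology

/-- Convergence of a sequence to a point with respect to a vector-valued distance. -/
def VConv {X : Type*} {n : ℕ} (d : X → X → Fin n → ℝ) (x : ℕ → X) (l : X) : Prop :=
  Filter.Tendsto (fun k => d (x k) l) Filter.atTop (nhds 0)

/-- Cauchy sequence with respect to a vector-valued distance. -/
def VCauchy {X : Type*} {n : ℕ} (d : X → X → Fin n → ℝ) (x : ℕ → X) : Prop :=
  Filter.Tendsto (fun p : ℕ × ℕ => d (x p.1) (x p.2)) Filter.atTop (nhds 0)

/-- Completeness: every Cauchy sequence converges. -/
def VComplete {X : Type*} {n : ℕ} (d : X → X → Fin n → ℝ) : Prop :=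
  ∀ x : ℕ → X, VCauchy d x → ∃ l, VConv d x l

/-- `d` is a vector `B`-metric on `X`. -/
def IsVectorBMetric {X : Type*} {n : ℕ} (B : Matrix (Fin n) (Fin n) ℝ)
    (d : X → X → Fin n → ℝ) : Prop :=
  (∀ u v, 0 ≤ d u v) ∧ (∀ u v, d u v = 0 ↔ u = v) ∧
  (∀ u v, d u v = d v u) ∧
  (∀ u v w, d u w ≤ B.mulVec (d u v + d v w))

/-- A matrix is positive if all its entries are nonnegative. -/
def MatPos {n : ℕ} (M : Matrix (Fin n) (Fin n) ℝ) : Prop := ∀ i j, 0 ≤ M i j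

/-- A matrix is convergent to zero if its powers tend to the zero matrix. -/
def MatConvZero {n : ℕ} (A : Matrix (Fin n) (Fin n) ℝ) : Prop :=
  Filter.Tendsto (fun k => A ^ k) Filter.atTop (nhds 0)

/-- A matrix is inverse-positive if it is invertible and its inverse is positive. -/
def InvPos {n : ℕ} (M : Matrix (Fin n) (Fin n) ℝ) : Prop :=
  IsUnit M ∧ MatPos M⁻¹

/-- A set is closed w.r.t. `d` if it contains limits of its convergent sequences. -/
def VClosed {X : Type*} {n : ℕ} (d : X → X → Fin n → ℝ) (F : Set X) : Prop :=
  ∀ x : ℕ → X, (∀ k, x k ∈ F) → ∀ l, VConv d x l → l ∈ F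

/-- The vector metric `d` is continuous. -/
def VContinuousD {X : Type*} {n : ℕ} (d : X → X → Fin n → ℝ) : Prop :=
  ∀ (x y : ℕ → X) (a b : X), VConv d x a → VConv d y b →
    Filter.Tendsto (fun k => d (x k) (y k)) Filter.atTop (nhds (d a b))

/-- `f` is (sequentially) lower semicontinuous w.r.t. `d`, componentwise. -/
def VLSC {X : Type*} {n : ℕ} (d : X → X → Fin n → ℝ) (f : X → Fin n → ℝ) : Prop :=
  ∀ (x : ℕ → X) (l : X), VConv d x l →
    ∀ i, f l i ≤ Filter.liminf (fun k => f (x k) i) Filter.atTop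

/-- Condition (H): on every nonempty closed set, `f` has almost-infimum points. -/
def CondH {X : Type*} {n : ℕ} (d : X → X → Fin n → ℝ) (f : X → Fin n → ℝ) : Prop :=
  ∀ F : Set X, F.Nonempty → VClosed d F → ∀ ε : ℝ, 0 < ε →
    ∃ x₀ ∈ F, ∀ x ∈ F, ∀ i, f x₀ i ≤ f x i + ε

/-!
Choose `x₀, x₁, …` so that `x k` minimises `f` up to `ε / (k + 1)` over the points `y` with
`f y + (ε / δ) d(y, x j) ≤ f (x j)` for all `j < k`. The points satisfying this also for `j = k`
form a decreasing sequence of closed sets, the `k`-th of which contains `x k` and lies within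
distance `δ / (k + 1)` of it. Cantor's intersection argument then shrinks these sets to the single
point `xs`. The last assertion reduces to the one before it by the triangle inequality through `xs`.
-/

section VectorBMetric

variable {X : Type*} {n : ℕ} {B : Matrix (Fin n) (Fin n) ℝ} {d : X → X → Fin n → ℝ}

theorem VClosed.iInter {ι : Sort*} {F : ι → Set X} (hF : ∀ i, VClosed d (F i)) :
    VClosed d (⋂ i, F i) := fun x hx l hl =>
  Set.mem_iInter.2 fun i => hF i x (fun k => Set.mem_iInter.1 (hx k) i) l hl

theorem VLSC.le_of_tendsto {f : X → Fin n → ℝ} (hf : VLSC d f) (hbdd : ∃ c, ∀ y, c ≤ f y)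
    {x : ℕ → X} {l : X} (hx : VConv d x l) {u : ℕ → Fin n → ℝ} {a : Fin n → ℝ}
    (hu : Tendsto u atTop (𝓝 a)) (hle : ∀ k, f (x k) ≤ u k) : f l ≤ a := by
  intro i
  obtain ⟨c, hc⟩ := hbdd
  have hui : Tendsto (fun k => u k i) atTop (𝓝 (a i)) := hu.apply_nhds i
  calc f l i ≤ liminf (fun k => f (x k) i) atTop := hf x l hx i
    _ ≤ liminf (fun k => u k i) atTop :=
      liminf_le_liminf (.of_forall fun k => hle k i)
        (isBoundedUnder_of ⟨c i, fun k => hc (x k) i⟩) hui.isBoundedUnder_le.isCoboundedUnder_ge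
    _ = a i := hui.liminf_eq

namespace IsVectorBMetric

theorem nonneg (hd : IsVectorBMetric B d) (u v : X) : 0 ≤ d u v := hd.1 u v

theorem eq_zero_iff (hd : IsVectorBMetric B d) {u v : X} : d u v = 0 ↔ u = v := hd.2.1 u v

theorem self (hd : IsVectorBMetric B d) (u : X) : d u u = 0 := hd.eq_zero_iff.2 rfl

theorem comm (hd : IsVectorBMetric B d) (u v : X) : d u v = d v u := hd.2.2.1 u v

theorem triangle (hd : IsVectorBMetric B d) (u v w : X) : d u w ≤ B *ᵥ (d u v + d v w) :=
  hd.2.2.2 u v w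

theorem vConv_const (hd : IsVectorBMetric B d) (a : X) : VConv d (fun _ => a) a := by
  simpa only [VConv, hd.self] using tendsto_const_nhds

theorem vConv_unique (hd : IsVectorBMetric B d) (hcont : VContinuousD d) {x : ℕ → X} {a b : X}
    (ha : VConv d x a) (hb : VConv d x b) : a = b := by
  have hself : Tendsto (fun k => d (x k) (x k)) atTop (𝓝 (d a b)) := hcont x x a b ha hb
  simp only [hd.self] at hself
  exact hd.eq_zero_iff.1 (tendsto_nhds_unique hself tendsto_const_nhds)

theorem tendsto_zero_of_le (hd : IsVectorBMetric B d) {α : Type*} {l : Filter α} {u v : α → X}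
    {r : α → Fin n → ℝ} (hr : Tendsto r l (𝓝 0)) (hle : ∀ t, d (u t) (v t) ≤ r t) :
    Tendsto (fun t => d (u t) (v t)) l (𝓝 0) :=
  (tendsto_const_nhds.Icc hr).of_smallSets (.of_forall fun t => ⟨hd.nonneg _ _, hle t⟩)

theorem vConv_of_le (hd : IsVectorBMetric B d) {x : ℕ → X} {y : X} {r : ℕ → Fin n → ℝ}
    (hr : Tendsto r atTop (𝓝 0)) (hle : ∀ k, d y (x k) ≤ r k) : VConv d x y :=
  hd.tendsto_zero_of_le hr fun k => hd.comm (x k) y ▸ hle k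

theorem vCauchy_of_le (hd : IsVectorBMetric B d) {x : ℕ → X} {r : ℕ → Fin n → ℝ}
    (hr : Tendsto r atTop (𝓝 0)) (hle : ∀ p q, p ≤ q → d (x q) (x p) ≤ r p) : VCauchy d x := by
  have hmin : Tendsto (fun t : ℕ × ℕ => min t.1 t.2) atTop atTop :=
    tendsto_atTop.2 fun m => (eventually_ge_atTop (m, m)).mono fun t ht => le_min ht.1 ht.2
  refine hd.tendsto_zero_of_le (hr.comp hmin) fun ⟨p, q⟩ => ?_
  rcases le_total p q with hpq | hqp
  · simpa only [Function.comp_apply, min_eq_left hpq, hd.comm (x p)] using hle p q hpq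
  · simpa only [Function.comp_apply, min_eq_right hqp] using hle q p hqp

theorem exists_vConv_iInter_eq_singleton (hd : IsVectorBMetric B d) (hcomp : VComplete d)
    (hcont : VContinuousD d) {F : ℕ → Set X} (hanti : Antitone F) (hF : ∀ k, VClosed d (F k))
    {x : ℕ → X} (hx : ∀ k, x k ∈ F k) {r : ℕ → Fin n → ℝ} (hr : Tendsto r atTop (𝓝 0))
    (hle : ∀ k, ∀ y ∈ F k, d y (x k) ≤ r k) :
    ∃ z, VConv d x z ∧ ⋂ k, F k = {z} := by
  obtain ⟨z, hz⟩ := hcomp x (hd.vCauchy_of_le hr fun p q hpq => hle p _ (hanti hpq (hx q)))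
  refine ⟨z, hz, Set.eq_singleton_iff_unique_mem.2 ⟨Set.mem_iInter.2 fun k => ?_, fun y hy => ?_⟩⟩
  · exact hF k (fun m => x (m + k)) (fun m => hanti (Nat.le_add_left k m) (hx _)) z
      ((tendsto_add_atTop_iff_nat k).2 hz)
  · have hyx : VConv d x y := hd.vConv_of_le hr fun k => hle k y (Set.mem_iInter.1 hy k)
    exact hd.vConv_unique hcont hyx hz

end IsVectorBMetric

/-- The set of points `y` whose value `f y` lies below `f a` by at least `c` times the distance
from `y` to `a`. For a metric this is the down-set of `a` in Ekeland's order; for a vector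
`B`-metric the relation `y ∈ ekelandSlice d f c a` need not be transitive. -/
def ekelandSlice (d : X → X → Fin n → ℝ) (f : X → Fin n → ℝ) (c : ℝ) (a : X) : Set X :=
  {y | f y + c • d y a ≤ f a}

/-- A sequence each of whose terms `x k` minimises `f` up to `ε k` over the intersection of the
slices at the earlier terms. The whole history is intersected because slices need not be nested. -/
structure IsEkelandSeq (d : X → X → Fin n → ℝ) (f : X → Fin n → ℝ) (c : ℝ) (ε : ℕ → ℝ)
    (x : ℕ → X) : Prop where
  mem_slice : ∀ k, ∀ j < k, x k ∈ ekelandSlice d f c (x j)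
  le_add : ∀ k y, (∀ j < k, y ∈ ekelandSlice d f c (x j)) → ∀ i, f (x k) i ≤ f y i + ε k

variable {f : X → Fin n → ℝ} {c : ℝ}

theorem mem_ekelandSlice {a y : X} : y ∈ ekelandSlice d f c a ↔ f y + c • d y a ≤ f a := Iff.rfl

theorem IsVectorBMetric.mem_ekelandSlice_self (hd : IsVectorBMetric B d) (a : X) :
    a ∈ ekelandSlice d f c a := by
  simp only [mem_ekelandSlice, hd.self, smul_zero, add_zero, le_refl]

theorem IsVectorBMetric.vClosed_ekelandSlice (hd : IsVectorBMetric B d) (hcont : VContinuousD d)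
    (hf : VLSC d f) (hbdd : ∃ b, ∀ y, b ≤ f y) (a : X) : VClosed d (ekelandSlice d f c a) := by
  intro x hx l hl
  have hdist : Tendsto (fun k => d (x k) a) atTop (𝓝 (d l a)) :=
    hcont x (fun _ => a) l a hl (hd.vConv_const a)
  exact le_sub_iff_add_le.1 <| hf.le_of_tendsto hbdd hl
    (tendsto_const_nhds.sub (hdist.const_smul c)) fun k => le_sub_iff_add_le.2 (hx k)

theorem exists_seq_succ_eq_dissipate {α β : Type*} (S : α → Set β) (next : ℕ → Set β → α)
    (a : α) :
    ∃ x : ℕ → α, x 0 = a ∧ ∀ k, x (k + 1) = next k (Set.dissipate (fun j => S (x j)) k) := by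
  let state : ℕ → α × Set β := fun k =>
    Nat.rec (a, S a) (fun k s => (next k s.2, s.2 ∩ S (next k s.2))) k
  have hstate : ∀ k, (state k).2 = Set.dissipate (fun j => S (state j).1) k := by
    intro k
    induction k with
    | zero =>
      rw [Set.dissipate_zero_nat]
      rfl
    | succ k ih => rw [Set.dissipate_succ, ← ih]
  exact ⟨fun k => (state k).1, rfl, fun k => congrArg (next k) (hstate k)⟩

theorem CondH.exists_isEkelandSeq (hH : CondH d f) (hself : ∀ a, a ∈ ekelandSlice d f c a)
    (hclosed : ∀ a, VClosed d (ekelandSlice d f c a)) {ε : ℕ → ℝ} (hε : ∀ k, 0 < ε k) {x₀ : X}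
    (hx₀ : ∀ y i, f x₀ i ≤ f y i + ε 0) :
    ∃ x : ℕ → X, x 0 = x₀ ∧ IsEkelandSeq d f c ε x := by
  have : Nonempty X := ⟨x₀⟩
  have hnear (k : ℕ) (F : Set X) (hF : F.Nonempty ∧ VClosed d F) :
      ∃ a ∈ F, ∀ y ∈ F, ∀ i, f a i ≤ f y i + ε (k + 1) := hH F hF.1 hF.2 _ (hε _)
  choose! next hnext_mem hnext_le using hnear
  obtain ⟨x, hx0, hx⟩ := exists_seq_succ_eq_dissipate (ekelandSlice d f c) next x₀
  set F : ℕ → Set X := Set.dissipate fun j => ekelandSlice d f c (x j) with hFdef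
  have hFclosed (k : ℕ) : VClosed d (F k) := .iInter fun j => .iInter fun _ => hclosed (x j)
  have hxF (k : ℕ) : x k ∈ F k := by
    induction k with
    | zero =>
      rw [hFdef, Set.dissipate_zero_nat]
      exact hself _
    | succ k ih =>
      rw [hFdef, Set.dissipate_succ]
      exact ⟨hx k ▸ hnext_mem k (F k) ⟨⟨x k, ih⟩, hFclosed k⟩, hself _⟩
  refine ⟨x, hx0, fun k j hj => Set.mem_dissipate.1 (hxF k) j hj.le, fun k y hy => ?_⟩
  cases k with
  | zero => exact hx0 ▸ hx₀ y
  | succ k =>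
    exact hx k ▸ hnext_le k (F k) ⟨⟨x k, hxF k⟩, hFclosed k⟩ y
      (Set.mem_dissipate.2 fun j hj => hy j (Nat.lt_succ_of_le hj))

namespace IsEkelandSeq

variable {ε : ℕ → ℝ} {x : ℕ → X}

theorem dist_le (hx : IsEkelandSeq d f c ε x) (hc : 0 < c) {k : ℕ} {y : X}
    (hy : ∀ j ≤ k, y ∈ ekelandSlice d f c (x j)) (i : Fin n) : d y (x k) i ≤ ε k / c := by
  have hdrop : f y i + c * d y (x k) i ≤ f (x k) i := hy k le_rfl i
  have hnear : f (x k) i ≤ f y i + ε k := hx.le_add k y (fun j hj => hy j hj.le) i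
  rw [le_div_iff₀' hc]
  linarith

theorem exists_vConv_iInter_slice_eq_singleton (hx : IsEkelandSeq d f c ε x)
    (hd : IsVectorBMetric B d) (hcomp : VComplete d) (hcont : VContinuousD d)
    (hclosed : ∀ a, VClosed d (ekelandSlice d f c a)) (hc : 0 < c) (hε : Tendsto ε atTop (𝓝 0)) :
    ∃ z, VConv d x z ∧ ⋂ k, ekelandSlice d f c (x k) = {z} := by
  have hr : Tendsto (fun k (_ : Fin n) => ε k / c) atTop (𝓝 0) :=
    tendsto_pi_nhds.2 fun _ => by simpa only [zero_div, Pi.zero_apply] using hε.div_const c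
  rw [← Set.iInter_dissipate]
  refine hd.exists_vConv_iInter_eq_singleton hcomp hcont Set.antitone_dissipate
    (fun k => .iInter fun j => .iInter fun _ => hclosed (x j)) (fun k => ?_) hr
    fun k y hy => hx.dist_le hc (Set.mem_dissipate.1 hy)
  refine Set.mem_dissipate.2 fun j hj => ?_
  rcases hj.eq_or_lt with rfl | hlt
  · exact hd.mem_ekelandSlice_self _
  · exact hx.mem_slice k j hlt

end IsEkelandSeq

theorem IsVectorBMetric.add_smul_le_of_add_smul_mulVec_le (hd : IsVectorBMetric B d) (hc : 0 ≤ c)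
    {y z a : X} (h : f y + c • B *ᵥ d z y + c • (B - 1) *ᵥ d z a ≤ f z) :
    f y + c • d y a ≤ f z + c • d z a := by
  have htri : d y a ≤ B *ᵥ d z y + B *ᵥ d z a := by
    simpa only [mulVec_add, hd.comm y z] using hd.triangle y z a
  calc f y + c • d y a ≤ f y + c • (B *ᵥ d z y + B *ᵥ d z a) := by gcongr
    _ = f y + c • B *ᵥ d z y + c • (B - 1) *ᵥ d z a + c • d z a := by
      rw [sub_mulVec, one_mulVec]
      module
    _ ≤ f z + c • d z a := by gcongr

end VectorBMetric

theorem strong_ekeland_vector {X : Type*} {n : ℕ} (hn : 0 < n)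
    (B : Matrix (Fin n) (Fin n) ℝ) (d : X → X → Fin n → ℝ)
    (hmet : IsVectorBMetric B d) (hcomp : VComplete d)
    (hdcont : VContinuousD d)
    (f : X → Fin n → ℝ) (hlsc : VLSC d f)
    (hbdd : ∃ c : Fin n → ℝ, ∀ x : X, c ≤ f x)
    (hH : CondH d f)
    (ε δ : ℝ) (hε : 0 < ε) (hδ : 0 < δ)
    (x₀ : X) (hx₀ : ∀ x : X, ∀ i, f x₀ i ≤ f x i + ε) :
    ∃ (x : ℕ → X) (xs : X),
      VConv d x xs ∧
      f xs ≤ f x₀ ∧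
      (∀ i, d xs x₀ i ≤ δ) ∧
      (∀ y : X,
        (∀ k : ℕ, f y + (ε / δ) • d y (x k) ≤ f xs + (ε / δ) • d xs (x k)) →
        y = xs) ∧
      (∀ y : X,
        (∀ k : ℕ, f y + (ε / δ) • B.mulVec (d xs y)
            + (ε / δ) • (B - 1).mulVec (d xs (x k)) ≤ f xs) →
        y = xs) := by
  have hc : 0 < ε / δ := div_pos hε hδ
  have hclosed : ∀ a, VClosed d (ekelandSlice d f (ε / δ) a) :=
    hmet.vClosed_ekelandSlice hdcont hlsc hbdd
  have hlim : Tendsto (fun k : ℕ => ε / ((k : ℝ) + 1)) atTop (𝓝 0) := by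
    simpa only [mul_one_div, mul_zero] using tendsto_one_div_add_atTop_nhds_zero_nat.const_mul ε
  obtain ⟨x, rfl, hx⟩ := hH.exists_isEkelandSeq (ε := fun k => ε / ((k : ℝ) + 1))
    hmet.mem_ekelandSlice_self hclosed (fun k => by positivity) (x₀ := x₀) (by simpa using hx₀)
  obtain ⟨xs, hconv, hInter⟩ := hx.exists_vConv_iInter_slice_eq_singleton hmet hcomp hdcont hclosed
    hc hlim
  obtain ⟨hxs, hunique⟩ := Set.eq_singleton_iff_unique_mem.1 hInter
  rw [Set.mem_iInter] at hxs
  have hstrong (y : X) (hy : ∀ k, f y + (ε / δ) • d y (x k) ≤ f xs + (ε / δ) • d xs (x k)) :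
      y = xs :=
    hunique y (Set.mem_iInter.2 fun k => (hy k).trans (hxs k))
  refine ⟨x, xs, hconv, ?_, fun i => ?_, hstrong, fun y hy => hstrong y fun k => ?_⟩
  · exact (le_add_of_nonneg_right (smul_nonneg hc.le (hmet.nonneg _ _))).trans (hxs 0)
  · simpa [hε.ne'] using hx.dist_le hc (k := 0) (fun j _ => hxs j) i
  · exact hmet.add_smul_le_of_add_smul_mulVec_le hc.le (hy k)
end

section
/- (Strong Ekeland variational principle in b-metric spaces.) Let (X,ρ) be a complete b-metric space (b ≥ 1) such that ρ is continuous, and let f : X → ℝ be a lower semicontinuous function bounded from below. Then for given ε, δ > 0 and x₀ ∈ X with f(x₀) ≤ inf_{x∈X} f(x) + ε, there exist a sequence (x_k) ⊂ X and x* ∈ X such that: x_k → x* as k → ∞; f(x*) ≤ f(x₀); ρ(x*, x₀) ≤ δ; for each x ∈ X with x ≠ x* there exists an index k = k(x) with f(x*) + (ε/δ) ρ(x*, x_k) < f(x) + (ε/δ) ρ(x, x_k); and moreover, for each x ∈ X with x ≠ x* there exists an index k = k(x) with f(x*) < f(x) + b (ε/δ) ρ(x*, x) + (b − 1)(ε/δ)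 ρ(x*, x_k). -/
open Filter Topology

/-- `ρ` is a `b`-metric on `X`. -/
def IsBMetric {X : Type*} (b : ℝ) (ρ : X → X → ℝ) : Prop :=
  (∀ x y, 0 ≤ ρ x y) ∧ (∀ x y, ρ x y = 0 ↔ x = y) ∧
  (∀ x y, ρ x y = ρ y x) ∧
  (∀ x y z, ρ x z ≤ b * (ρ x y + ρ y z))

/-- Convergence of a sequence with respect to `ρ`. -/
def BConv {X : Type*} (ρ : X → X → ℝ) (x : ℕ → X) (l : X) : Prop :=
  Filter.Tendsto (fun k => ρ (x k) l) Filter.atTop (nhds 0)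

/-- Cauchy sequence with respect to `ρ`. -/
def BCauchy {X : Type*} (ρ : X → X → ℝ) (x : ℕ → X) : Prop :=
  Filter.Tendsto (fun p : ℕ × ℕ => ρ (x p.1) (x p.2)) Filter.atTop (nhds 0)

/-- Completeness: every Cauchy sequence converges. -/
def BComplete {X : Type*} (ρ : X → X → ℝ) : Prop :=
  ∀ x : ℕ → X, BCauchy ρ x → ∃ l, BConv ρ x l

/-- The `b`-metric `ρ` is continuous. -/
def BContinuousRho {X : Type*} (ρ : X → X → ℝ) : Prop :=
  ∀ (x y : ℕ → X) (a c : X), BConv ρ x a → BConv ρ y c →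
    Filter.Tendsto (fun k => ρ (x k) (y k)) Filter.atTop (nhds (ρ a c))

/-- `f` is (sequentially) lower semicontinuous w.r.t. `ρ`. -/
def BLSC {X : Type*} (ρ : X → X → ℝ) (f : X → ℝ) : Prop :=
  ∀ (x : ℕ → X) (l : X), BConv ρ x l →
    f l ≤ Filter.liminf (fun k => f (x k)) Filter.atTop

/-!
Greedily choose `x (n + 1)` as a near-minimiser of `f` on the intersection of the sets
`{y | f y + (ε / δ) * ρ y (x k) ≤ f (x k)}` for `k ≤ n`. Intersecting replaces the nesting of these
sets, which in a metric space comes from the triangle inequality and is lost when `b > 1`.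
Near-minimality bounds the distance to `x n` of every point of the `n`-th intersection by a null
sequence, so the `x n` are Cauchy and their limit is the only point in all of the sets; a point
`y` other than the limit violates the inequality for some `k`.
-/

/-- Sequential lower semicontinuity of `f` with respect to `ρ`, i.e. `f l ≤ liminf f (x k)` in the
extended reals. Avoiding `liminf` matters where `f (x k)` tends to `+∞`: the real `liminf` in `BLSC`
then takes the junk value `0`. -/
def SeqLowerSemicontinuous {X : Type*} (ρ : X → X → ℝ) (f : X → ℝ) : Prop :=
  ∀ (x : ℕ → X) (l : X), BConv ρ x l → ∀ a < f l, ∀ᶠ k in atTop, a < f (x k)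

/-- The points lying below `a` in the Ekeland relation of slope `c`, the comparison that drives the
variational principle. For a `b`-metric with `b > 1` it need not be transitive. -/
def ekelandSet {X : Type*} (ρ : X → X → ℝ) (f : X → ℝ) (c : ℝ) (a : X) : Set X :=
  {y | f y + c * ρ y a ≤ f a}

/-- A sequence whose `n`-th term minimises `f`, up to the error `η n`, among the points that belong
to the sets `S (x k)` attached to all earlier terms. For the sets
`ekelandSet ρ f c` such sequences are Cauchy when `η n → 0`. -/
structure IsGreedySeq {X : Type*} (S : X → Set X) (f : X → ℝ) (η : ℕ → ℝ) (x : ℕ → X) :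
    Prop where
  mem : ∀ ⦃k n⦄, k < n → x n ∈ S (x k)
  le_add : ∀ n y, (∀ k < n, y ∈ S (x k)) → f (x n) ≤ f y + η n

section

variable {X : Type*} {ρ : X → X → ℝ} {b c : ℝ} {f g : X → ℝ} {x : ℕ → X} {l : X}

namespace IsBMetric

lemma nonneg (hρ : IsBMetric b ρ) (y z : X) : 0 ≤ ρ y z := hρ.1 y z

lemma eq_zero_iff (hρ : IsBMetric b ρ) {y z : X} : ρ y z = 0 ↔ y = z := hρ.2.1 y z

lemma self_eq_zero (hρ : IsBMetric b ρ) (y : X) : ρ y y = 0 := hρ.eq_zero_iff.2 rfl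

lemma symm (hρ : IsBMetric b ρ) (y z : X) : ρ y z = ρ z y := hρ.2.2.1 y z

lemma triangle (hρ : IsBMetric b ρ) (y z w : X) : ρ y w ≤ b * (ρ y z + ρ z w) := hρ.2.2.2 y z w

lemma bConv_const (hρ : IsBMetric b ρ) (a : X) : BConv ρ (fun _ => a) a := by
  simp only [BConv, hρ.self_eq_zero, tendsto_const_nhds]

lemma bConv_of_le (hρ : IsBMetric b ρ) {r : ℕ → ℝ} (hr : Tendsto r atTop (𝓝 0))
    (hle : ∀ n, ρ l (x n) ≤ r n) : BConv ρ x l :=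
  squeeze_zero (fun _ => hρ.nonneg _ _) (fun n => (hρ.symm _ _).trans_le (hle n)) hr

lemma bConv_unique (hρ : IsBMetric b ρ) {y z : X} (hy : BConv ρ x y) (hz : BConv ρ x z) :
    y = z := by
  have hbound : Tendsto (fun n => b * (ρ (x n) y + ρ (x n) z)) atTop (𝓝 0) := by
    simpa only [add_zero, mul_zero] using (hy.add hz).const_mul b
  have hle : ρ y z ≤ 0 := ge_of_tendsto' hbound fun n => by
    rw [hρ.symm (x n) y]
    exact hρ.triangle y (x n) z
  exact hρ.eq_zero_iff.1 (hle.antisymm (hρ.nonneg y z))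

lemma bCauchy_of_le (hρ : IsBMetric b ρ) {r : ℕ → ℝ} (hr : Tendsto r atTop (𝓝 0))
    (hle : ∀ n p, n ≤ p → ρ (x p) (x n) ≤ r n) : BCauchy ρ x := by
  have hmin : Tendsto (fun p : ℕ × ℕ => min p.1 p.2) atTop atTop :=
    tendsto_atTop.2 fun N => (eventually_ge_atTop (N, N)).mono fun _ hp => le_min hp.1 hp.2
  refine squeeze_zero (fun _ => hρ.nonneg _ _) (fun p => ?_) (hr.comp hmin)
  rcases le_total p.1 p.2 with h | h
  · simpa only [Function.comp_apply, min_eq_left h, hρ.symm (x p.1)] using hle p.1 p.2 h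
  · simpa only [Function.comp_apply, min_eq_right h] using hle p.2 p.1 h

lemma self_mem_ekelandSet (hρ : IsBMetric b ρ) (a : X) : a ∈ ekelandSet ρ f c a := by
  simp [ekelandSet, hρ.self_eq_zero]

lemma lt_add_of_perturbed_lt (hρ : IsBMetric b ρ) (hc : 0 ≤ c) {y z w : X}
    (h : f z + c * ρ z w < f y + c * ρ y w) :
    f z < f y + b * c * ρ z y + (b - 1) * c * ρ z w := by
  have htri : c * ρ y w ≤ c * (b * (ρ z y + ρ z w)) := by
    rw [hρ.symm z y]
    exact mul_le_mul_of_nonneg_left (hρ.triangle y z w) hc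
  linarith

end IsBMetric

namespace SeqLowerSemicontinuous

lemma add (hf : SeqLowerSemicontinuous ρ f) (hg : SeqLowerSemicontinuous ρ g) :
    SeqLowerSemicontinuous ρ (fun y => f y + g y) := by
  intro x l hx a ha
  filter_upwards [hf x l hx (f l - (f l + g l - a) / 2) (by linarith),
    hg x l hx (g l - (f l + g l - a) / 2) (by linarith)] with k hfk hgk
  linarith

lemma const_mul (hf : SeqLowerSemicontinuous ρ f) (hc : 0 < c) :
    SeqLowerSemicontinuous ρ (fun y => c * f y) := fun x l hx a ha =>
  (hf x l hx (a / c) ((div_lt_iff₀' hc).2 ha)).mono fun _ => (div_lt_iff₀' hc).1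

lemma le_of_eventually_le (hf : SeqLowerSemicontinuous ρ f) (hx : BConv ρ x l) {r : ℝ}
    (hr : ∀ᶠ k in atTop, f (x k) ≤ r) : f l ≤ r := by
  by_contra! hlt
  obtain ⟨k, hk, hk'⟩ := ((hf x l hx r hlt).and hr).exists
  exact hk.not_ge hk'

end SeqLowerSemicontinuous

lemma BLSC.seqLowerSemicontinuous (hf : BLSC ρ f) (hbdd : BddBelow (Set.range f)) :
    SeqLowerSemicontinuous ρ f := fun x l hx _ ha =>
  eventually_lt_of_lt_liminf (ha.trans_le (hf x l hx))
    (hbdd.mono (Set.range_comp_subset_range x f)).isBoundedUnder_of_range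

lemma BContinuousRho.seqLowerSemicontinuous (hcont : BContinuousRho ρ) (hρ : IsBMetric b ρ)
    (a : X) : SeqLowerSemicontinuous ρ (fun y => ρ y a) := fun x l hx _ hlt =>
  (hcont x (fun _ => a) l a hx (hρ.bConv_const a)).eventually_const_lt hlt

lemma exists_mem_forall_le_add {T : Set X} (hT : T.Nonempty) (hf : BddBelow (f '' T)) {η : ℝ}
    (hη : 0 < η) : ∃ a ∈ T, ∀ y ∈ T, f a ≤ f y + η := by
  obtain ⟨_, ⟨a, ha, rfl⟩, hlt⟩ := Real.lt_sInf_add_pos (hT.image f) hη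
  refine ⟨a, ha, fun y hy => hlt.le.trans ?_⟩
  gcongr
  exact csInf_le hf (Set.mem_image_of_mem f hy)

lemma exists_isGreedySeq {S : X → Set X} (hS : ∀ a, a ∈ S a) {η : ℕ → ℝ} (hη : ∀ n, 0 < η n)
    {x₀ : X} (hx₀ : ∀ y, f x₀ ≤ f y + η 0) : ∃ x, x 0 = x₀ ∧ IsGreedySeq S f η x := by
  have hbdd (T : Set X) : BddBelow (f '' T) :=
    ⟨f x₀ - η 0, Set.forall_mem_image.2 fun y _ => sub_le_iff_le_add.2 (hx₀ y)⟩
  -- A state consists of the set still admissible and the point chosen from it.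
  let State := {p : Set X × X // p.2 ∈ p.1}
  have hstep (n : ℕ) (p : State) : ∃ q : State, q.1.1 = p.1.1 ∩ S p.1.2 ∧
      ∀ y ∈ q.1.1, f q.1.2 ≤ f y + η (n + 1) := by
    obtain ⟨a, ha, hmin⟩ :=
      exists_mem_forall_le_add (T := p.1.1 ∩ S p.1.2) ⟨p.1.2, p.2, hS p.1.2⟩ (hbdd _) (hη (n + 1))
    exact ⟨⟨(_, a), ha⟩, rfl, hmin⟩
  choose next hnext hmin using hstep
  let s : ℕ → State := fun n => Nat.rec ⟨(Set.univ, x₀), Set.mem_univ x₀⟩ next n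
  have hmem (n : ℕ) (y : X) : y ∈ (s n).1.1 ↔ ∀ k < n, y ∈ S (s k).1.2 := by
    induction n with
    | zero => simp [s]
    | succ n ih => rw [Nat.forall_lt_succ_right, ← ih]; exact Set.ext_iff.1 (hnext n (s n)) y
  refine ⟨fun n => (s n).1.2, rfl, fun k n hkn => (hmem n _).1 (s n).2 k hkn, fun n y hy => ?_⟩
  cases n with
  | zero => exact hx₀ y
  | succ n => exact hmin n (s n) y ((hmem (n + 1) y).2 hy)

namespace IsGreedySeq

variable {η : ℕ → ℝ}

lemma mem_of_le {S : X → Set X} (hx : IsGreedySeq S f η x) (hS : ∀ a, a ∈ S a) {k n : ℕ}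
    (hkn : k ≤ n) : x n ∈ S (x k) := by
  rcases hkn.eq_or_lt with rfl | hlt
  · exact hS (x k)
  · exact hx.mem hlt

lemma dist_le (hx : IsGreedySeq (ekelandSet ρ f c) f η x) (hc : 0 < c) {n : ℕ} {y : X}
    (hy : ∀ k ≤ n, y ∈ ekelandSet ρ f c (x k)) : ρ y (x n) ≤ η n / c := by
  have hdescent : f y + c * ρ y (x n) ≤ f (x n) := hy n le_rfl
  have hmin : f (x n) ≤ f y + η n := hx.le_add n y fun k hk => hy k hk.le
  rw [le_div_iff₀' hc]
  linarith

lemma bCauchy (hx : IsGreedySeq (ekelandSet ρ f c) f η x) (hρ : IsBMetric b ρ) (hc : 0 < c)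
    (hη : Tendsto η atTop (𝓝 0)) : BCauchy ρ x :=
  hρ.bCauchy_of_le (by simpa only [zero_div] using hη.div_const c) fun _ _ hnp =>
    hx.dist_le hc fun _ hkn => hx.mem_of_le hρ.self_mem_ekelandSet (hkn.trans hnp)

lemma limit_mem (hx : IsGreedySeq (ekelandSet ρ f c) f η x) (hc : 0 < c)
    (hρ_lsc : ∀ a, SeqLowerSemicontinuous ρ (fun y => ρ y a)) (hf : SeqLowerSemicontinuous ρ f)
    (hl : BConv ρ x l) (k : ℕ) : l ∈ ekelandSet ρ f c (x k) :=
  (hf.add ((hρ_lsc (x k)).const_mul hc)).le_of_eventually_le hl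
    ((eventually_gt_atTop k).mono fun _ hkn => hx.mem hkn)

lemma eq_limit_of_forall_mem (hx : IsGreedySeq (ekelandSet ρ f c) f η x) (hρ : IsBMetric b ρ)
    (hc : 0 < c) (hη : Tendsto η atTop (𝓝 0)) (hl : BConv ρ x l) {y : X}
    (hy : ∀ k, y ∈ ekelandSet ρ f c (x k)) : y = l :=
  hρ.bConv_unique (hρ.bConv_of_le (by simpa only [zero_div] using hη.div_const c) fun _ =>
    hx.dist_le hc fun k _ => hy k) hl

lemma exists_perturbed_lt (hx : IsGreedySeq (ekelandSet ρ f c) f η x) (hρ : IsBMetric b ρ)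
    (hc : 0 < c) (hη : Tendsto η atTop (𝓝 0)) (hl : BConv ρ x l)
    (hl_mem : ∀ k, l ∈ ekelandSet ρ f c (x k)) {y : X} (hy : y ≠ l) :
    ∃ k, f l + c * ρ l (x k) < f y + c * ρ y (x k) := by
  by_contra! hle
  exact hy (hx.eq_limit_of_forall_mem hρ hc hη hl fun k => (hle k).trans (hl_mem k))

end IsGreedySeq

theorem strong_ekeland_bmetric_general (hρ : IsBMetric b ρ) (hcomp : BComplete ρ)
    (hρ_lsc : ∀ a, SeqLowerSemicontinuous ρ (fun y => ρ y a)) (hf : SeqLowerSemicontinuous ρ f)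
    {ε δ : ℝ} (hε : 0 < ε) (hδ : 0 < δ) {x₀ : X} (hx₀ : ∀ y, f x₀ ≤ f y + ε) :
    ∃ (x : ℕ → X) (xs : X),
      BConv ρ x xs ∧
      f xs ≤ f x₀ ∧
      ρ xs x₀ ≤ δ ∧
      (∀ y : X, y ≠ xs →
        ∃ k : ℕ, f xs + (ε / δ) * ρ xs (x k) < f y + (ε / δ) * ρ y (x k)) ∧
      (∀ y : X, y ≠ xs →
        ∃ k : ℕ, f xs < f y + b * (ε / δ) * ρ xs y + (b - 1) * (ε / δ) * ρ xs (x k)) := by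
  have hc : 0 < ε / δ := div_pos hε hδ
  -- The error at index `0` is `ε`, so `x₀` may start the sequence and lies within `ε / (ε / δ) = δ`
  -- of its limit.
  let η : ℕ → ℝ := fun n => ε / (n + 1)
  have hη_zero : η 0 = ε := by simp [η]
  have hη : Tendsto η atTop (𝓝 0) := by
    simpa only [mul_one_div, mul_zero] using tendsto_one_div_add_atTop_nhds_zero_nat.const_mul ε
  obtain ⟨x, rfl, hx⟩ := exists_isGreedySeq (S := ekelandSet ρ f (ε / δ)) hρ.self_mem_ekelandSet
    (fun n => by positivity) (hη_zero.symm ▸ hx₀)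
  obtain ⟨xs, hxs⟩ := hcomp x (hx.bCauchy hρ hc hη)
  have hmem := hx.limit_mem hc hρ_lsc hf hxs
  have hstrict (y : X) (hy : y ≠ xs) := hx.exists_perturbed_lt hρ hc hη hxs hmem hy
  refine ⟨x, xs, hxs, ?_, ?_, hstrict, fun y hy => ?_⟩
  · exact (le_add_of_nonneg_right (mul_nonneg hc.le (hρ.nonneg _ _))).trans (hmem 0)
  · simpa only [hη_zero, div_div_cancel₀ hε.ne'] using hx.dist_le hc (n := 0) fun k _ => hmem k
  · exact (hstrict y hy).imp fun _ => hρ.lt_add_of_perturbed_lt hc.le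

end

theorem strong_ekeland_bmetric {X : Type*}
    (b : ℝ) (hb : 1 ≤ b) (ρ : X → X → ℝ)
    (hmet : IsBMetric b ρ) (hcomp : BComplete ρ)
    (hρcont : BContinuousRho ρ)
    (f : X → ℝ) (hlsc : BLSC ρ f)
    (hbdd : ∃ c : ℝ, ∀ x : X, c ≤ f x)
    (ε δ : ℝ) (hε : 0 < ε) (hδ : 0 < δ)
    (x₀ : X) (hx₀ : f x₀ ≤ (⨅ x : X, f x) + ε) :
    ∃ (x : ℕ → X) (xs : X),
      BConv ρ x xs ∧
      f xs ≤ f x₀ ∧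
      ρ xs x₀ ≤ δ ∧
      (∀ y : X, y ≠ xs →
        ∃ k : ℕ, f xs + (ε / δ) * ρ xs (x k) < f y + (ε / δ) * ρ y (x k)) ∧
      (∀ y : X, y ≠ xs →
        ∃ k : ℕ, f xs < f y + b * (ε / δ) * ρ xs y + (b - 1) * (ε / δ) * ρ xs (x k)) := by
  have hf : BddBelow (Set.range f) := hbdd.imp fun _ hc => Set.forall_mem_range.2 hc
  exact strong_ekeland_bmetric_general hmet hcomp (hρcont.seqLowerSemicontinuous hmet)
    (hlsc.seqLowerSemicontinuous hf) hε hδ fun y => hx₀.trans (by gcongr; exact ciInf_le hf y)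
end
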